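/- (Turán's inequality) Let P be a complex polynomial of degree n ≥ 1 all of whose zeros lie in |z| ≤ 1. Then max_{|z|=1}|P′(z)| ≥ (n/2)·max_{|z|=1}|P(z)|. -/

import Mathlib

open Polynomial Metric

/-- The maximum of `|P(z)|` over the circle `|z| = r`. -/
noncomputable def maxMod (P : Polynomial ℂ) (r : ℝ) : ℝ :=
  ⨆ z : sphere (0 : ℂ) r, ‖P.eval (z : ℂ)‖

/-!
Away from the zeros of `P`, `z P'(z) / P(z) = ∑ z / (z - w)`, where `w` runs over the `n` zeros of
`P` with multiplicity. For `|z| = r`, every zero with `|w| ≤ k ≤ r` contributes at least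
`r / (r + k)` to the real part, so `|P'(z)| ≥ n / (r + k) * |P(z)|` at each point of the circle, in
particular where `|P|` is maximal. Turán's inequality is the case `k = r = 1`; the bound for
`k ≤ r = 1` is due to Malik.
-/

section MaxMod

variable (P : ℂ[X])

lemma continuous_norm_eval_sphere (r : ℝ) :
    Continuous fun z : sphere (0 : ℂ) r ↦ ‖P.eval (z : ℂ)‖ := by
  fun_prop

lemma norm_eval_le_maxMod (z : ℂ) : ‖P.eval z‖ ≤ maxMod P ‖z‖ :=
  le_ciSup (isCompact_range (continuous_norm_eval_sphere P ‖z‖)).bddAbove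
    ⟨z, mem_sphere_zero_iff_norm.2 rfl⟩

lemma exists_norm_eval_eq_maxMod {r : ℝ} (hr : 0 ≤ r) :
    ∃ z : ℂ, ‖z‖ = r ∧ ‖P.eval z‖ = maxMod P r := by
  have : Nonempty (sphere (0 : ℂ) r) := (NormedSpace.sphere_nonempty.2 hr).to_subtype
  obtain ⟨z, hz⟩ := (isCompact_range (continuous_norm_eval_sphere P r)).sSup_mem
    (Set.range_nonempty _)
  exact ⟨z, mem_sphere_zero_iff_norm.1 z.2, hz⟩

end MaxMod

section LogarithmicDerivative

variable {P : ℂ[X]} {z : ℂ}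

lemma norm_div_norm_add_norm_le_re_div_sub {w : ℂ} (hne : z ≠ w) (hwz : ‖w‖ ≤ ‖z‖) :
    ‖z‖ / (‖z‖ + ‖w‖) ≤ (z / (z - w)).re := by
  set p : ℝ := inner ℝ z w with hp
  have h_re : (z / (z - w)).re = (‖z‖ ^ 2 - p) / ‖z - w‖ ^ 2 := by
    rw [Complex.div_re, ← add_div, Complex.normSq_eq_norm_sq, hp, ← real_inner_self_eq_norm_sq z,
      ← inner_sub_right, Complex.inner, Complex.mul_re]
    simp only [Complex.conj_re, Complex.conj_im]
    ring
  have h_cauchy : -(‖z‖ * ‖w‖) ≤ p := neg_le_of_abs_le (abs_real_inner_le_norm z w)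
  have h_sub : 0 < ‖z - w‖ := norm_sub_pos_iff.2 hne
  have h_add : 0 < ‖z‖ + ‖w‖ := h_sub.trans_le (norm_sub_le z w)
  rw [h_re, div_le_div_iff₀ h_add (by positivity), norm_sub_sq_real]
  -- The difference of the two sides is `(‖z‖ - ‖w‖) * (‖z‖ * ‖w‖ + p)`.
  linarith [mul_nonneg (sub_nonneg.2 hwz) (neg_le_iff_add_nonneg'.1 h_cauchy)]

lemma natDegree_mul_le_re_mul_eval_derivative_div_eval {c : ℝ} (hPz : P.eval z ≠ 0)
    (hc : ∀ w ∈ P.roots, c ≤ (z / (z - w)).re) :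
    P.natDegree * c ≤ (z * (P.derivative.eval z / P.eval z)).re := by
  have h_splits := IsAlgClosed.splits P
  calc P.natDegree * c
      = (P.roots.map fun w ↦ (z / (z - w)).re).card • c := by
        rw [Multiset.card_map, nsmul_eq_mul, h_splits.natDegree_eq_card_roots]
    _ ≤ (P.roots.map fun w ↦ (z / (z - w)).re).sum :=
        Multiset.card_nsmul_le_sum (by simpa only [Multiset.forall_mem_map_iff] using hc)
    _ = (z * (P.derivative.eval z / P.eval z)).re := by
        rw [h_splits.eval_derivative_div_eval_of_ne_zero hPz, ← Multiset.sum_map_mul_left,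
          ← Complex.reCLM_apply, map_multiset_sum, Multiset.map_map]
        simp only [Function.comp_def, mul_one_div, Complex.reCLM_apply]

lemma natDegree_div_mul_norm_eval_le_norm_eval_derivative {k : ℝ} (hz : z ≠ 0) (hkz : k ≤ ‖z‖)
    (hroots : ∀ w, P.IsRoot w → ‖w‖ ≤ k) :
    P.natDegree / (‖z‖ + k) * ‖P.eval z‖ ≤ ‖P.derivative.eval z‖ := by
  by_cases hPz : P.eval z = 0
  · simp [hPz]
  have h_root : ∀ w ∈ P.roots, ‖z‖ / (‖z‖ + k) ≤ (z / (z - w)).re := by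
    intro w hw
    have hPw : P.IsRoot w := isRoot_of_mem_roots hw
    have hne : z ≠ w := fun h ↦ hPz (h ▸ hPw)
    calc ‖z‖ / (‖z‖ + k) ≤ ‖z‖ / (‖z‖ + ‖w‖) := by
          gcongr
          exact hroots w hPw
      _ ≤ (z / (z - w)).re :=
          norm_div_norm_add_norm_le_re_div_sub hne ((hroots w hPw).trans hkz)
  have h_norm : ‖z‖ * (P.natDegree / (‖z‖ + k)) ≤
      ‖z‖ * (‖P.derivative.eval z‖ / ‖P.eval z‖) :=
    calc ‖z‖ * (P.natDegree / (‖z‖ + k)) = P.natDegree * (‖z‖ / (‖z‖ + k)) := mul_div_left_comm ..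
      _ ≤ (z * (P.derivative.eval z / P.eval z)).re :=
          natDegree_mul_le_re_mul_eval_derivative_div_eval hPz h_root
      _ ≤ ‖z * (P.derivative.eval z / P.eval z)‖ := Complex.re_le_norm _
      _ = ‖z‖ * (‖P.derivative.eval z‖ / ‖P.eval z‖) := by rw [norm_mul, norm_div]
  exact (le_div_iff₀ (norm_pos_iff.2 hPz)).1 (le_of_mul_le_mul_left h_norm (norm_pos_iff.2 hz))

end LogarithmicDerivative

theorem stmt_9_general {P : ℂ[X]} {k r : ℝ} (hr : 0 < r) (hkr : k ≤ r)
    (hroots : ∀ w, P.IsRoot w → ‖w‖ ≤ k) :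
    P.natDegree / (r + k) * maxMod P r ≤ maxMod P.derivative r := by
  obtain ⟨z, rfl, hz_max⟩ := exists_norm_eval_eq_maxMod P hr.le
  calc P.natDegree / (‖z‖ + k) * maxMod P ‖z‖ = P.natDegree / (‖z‖ + k) * ‖P.eval z‖ := by
        rw [hz_max]
    _ ≤ ‖P.derivative.eval z‖ :=
        natDegree_div_mul_norm_eval_le_norm_eval_derivative (norm_pos_iff.1 hr) hkr hroots
    _ ≤ maxMod P.derivative ‖z‖ := norm_eval_le_maxMod P.derivative z

theorem stmt_9 (n : ℕ) (hn : 1 ≤ n) (P : Polynomial ℂ) (hdeg : P.natDegree = n)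
    (hroots : ∀ w : ℂ, P.IsRoot w → ‖w‖ ≤ 1) :
    maxMod (Polynomial.derivative P) 1 ≥ ((n : ℝ) / 2) * maxMod P 1 := by
  rw [← hdeg, ge_iff_le, ← one_add_one_eq_two]
  exact stmt_9_general one_pos le_rfl hroots
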